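/- In the deconvolution setting with data f = K*g and κ ≤ l_min/6: for every u_0 ∈ PC[0,1] there exists u_1 ∈ PC[0,1] which has no jump in the union ∪_i N_i and satisfies P_γ(u_1) ≤ P_γ(u_0). Consequently, min_{u ∈ PC[0,1]} P_γ(u) = min { P_γ(u) : u ∈ PC[0,1], all jump locations of u lie in ∪_i J_i }. -/

import Mathlib

open MeasureTheory Filter Set
open scoped ENNReal Classical

noncomputable section

/-- The Lebesgue measure restricted to `[0,1]`. -/
def mu01 : Measure ℝ := volume.restrict (Set.Icc (0:ℝ) 1)

/-- The step function determined by partition points `x` and values `a`. -/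
def stepF {m : ℕ} (x : Fin (m + 1) → ℝ) (a : Fin m → ℝ) : ℝ → ℝ := fun t =>
  ∑ l : Fin m, Set.indicator (Set.Ioo (x l.castSucc) (x l.succ)) (fun _ => a l) t

/-- `u` is a.e. on `[0,1]` represented by the step function with partition `x` and values `a`. -/
def IsPCRep (u : ℝ → ℝ) {m : ℕ} (x : Fin (m + 1) → ℝ) (a : Fin m → ℝ) : Prop :=
  StrictMono x ∧ x 0 = 0 ∧ x (Fin.last m) = 1 ∧ ∀ᵐ t ∂mu01, u t = stepF x a t

/-- `u` is piecewise constant on `[0,1]` (up to a.e. equality). -/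
def IsPC (u : ℝ → ℝ) : Prop :=
  ∃ (m : ℕ) (x : Fin (m + 1) → ℝ) (a : Fin m → ℝ), IsPCRep u x a

/-- The number of jumps `J(u)`: the minimal number of interior partition points over all
piecewise constant representations of `u`. -/
def jumps (u : ℝ → ℝ) : ℕ :=
  sInf {jj : ℕ | ∃ (x : Fin (jj + 2) → ℝ) (a : Fin (jj + 1) → ℝ), IsPCRep u x a}

/-- `u` is piecewise constant with all jump locations inside `S`. -/
def IsPCIn (u : ℝ → ℝ) (S : Set ℝ) : Prop :=
  ∃ (m : ℕ) (x : Fin (m + 1) → ℝ) (a : Fin m → ℝ), IsPCRep u x a ∧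
    ∀ i : Fin (m + 1), i ≠ 0 → i ≠ Fin.last m → x i ∈ S

/-- The `L¹[0,1]` distance of two functions. -/
def L1dist (u v : ℝ → ℝ) : ℝ := ∫ t, |u t - v t| ∂mu01

/-- The continuous `L¹`-Potts functional `P_γ` with data `f`. -/
def Potts (γ : ℝ) (f u : ℝ → ℝ) : ℝ≥0∞ :=
  if IsPC u then ENNReal.ofReal (γ * (jumps u : ℝ) + L1dist u f) else ⊤

/-- The (semi-)discrete `L¹`-Potts functional with data `f`, restricted to piecewise
constant functions whose jumps lie in `S`. -/
def PottsIn (γ : ℝ) (f : ℝ → ℝ) (S : Set ℝ) (u : ℝ → ℝ) : ℝ≥0∞ :=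
  if IsPCIn u S then ENNReal.ofReal (γ * (jumps u : ℝ) + L1dist u f) else ⊤

/-- Convolution `(K*g)(t) = ∫ K(s)·g(t−s) ds`. -/
def convK (K g : ℝ → ℝ) : ℝ → ℝ := fun t => ∫ s, K s * g (t - s)

/-- The piecewise constant function on `ℝ` with jump locations `j` and values `α`
(extended constantly outside the jump region): at `t`, its value is `α i` where `i`
is the number of jump locations strictly below `t`. -/
def stepOn {n : ℕ} (j : Fin n → ℝ) (α : Fin (n + 1) → ℝ) : ℝ → ℝ := fun t =>
  α ⟨(Finset.univ.filter fun i => j i < t).card,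
      Nat.lt_succ_of_le ((Finset.card_filter_le _ _).trans (by simp))⟩

/-- The jump locations together with the endpoints `0` and `1`. -/
def jext {n : ℕ} (j : Fin (n + 1) → ℝ) : Fin (n + 3) → ℝ :=
  Fin.cons (0 : ℝ) (Fin.snoc j (1 : ℝ))

/-- The minimal length `l_min` of the intervals of constancy (inside `[0,1]`). -/
def lmin {n : ℕ} (j : Fin (n + 1) → ℝ) : ℝ :=
  Finset.univ.inf' Finset.univ_nonempty
    fun i : Fin (n + 2) => jext j i.succ - jext j i.castSucc

/-- The minimal jump height `h_min`. -/
def hjumpMin {n : ℕ} (α : Fin (n + 2) → ℝ) : ℝ :=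
  Finset.univ.inf' Finset.univ_nonempty fun i : Fin (n + 1) => |α i.succ - α i.castSucc|

/-- The maximal jump height `h_max`. -/
def hjumpMax {n : ℕ} (α : Fin (n + 2) → ℝ) : ℝ :=
  Finset.univ.sup' Finset.univ_nonempty fun i : Fin (n + 1) => |α i.succ - α i.castSucc|

/-- The (real-valued) `L¹`-Potts value `γ·J(u) + ‖u − f‖₁` for piecewise constant `u`. -/
def PottsVal (γ : ℝ) (f u : ℝ → ℝ) : ℝ := γ * (jumps u : ℝ) + L1dist u f

/-- `v` is constant on every subinterval of `(0,1)` that does not meet `C`. -/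
def ConstOff (v : ℝ → ℝ) (C : Set ℝ) : Prop :=
  ∀ s t, 0 < s → s < t → t < 1 → (∀ y ∈ C, y ∉ Set.Icc s t) → v s = v t

lemma ConstOff.eq {v : ℝ → ℝ} {C : Set ℝ} (h : ConstOff v C) {A B s t : ℝ}
    (hA : 0 ≤ A) (hB : B ≤ 1) (hs : s ∈ Set.Ioo A B) (ht : t ∈ Set.Ioo A B)
    (hC : ∀ y ∈ C, y ∉ Set.Ioo A B) : v s = v t := by
  obtain ⟨hs1, hs2⟩ := hs
  obtain ⟨ht1, ht2⟩ := ht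
  rcases lt_trichotomy s t with hst | hst | hst
  · exact h s t (by linarith) hst (by linarith)
      fun y hy hyI => hC y hy ⟨by linarith [hyI.1], by linarith [hyI.2]⟩
  · rw [hst]
  · exact (h t s (by linarith) hst (by linarith)
      fun y hy hyI => hC y hy ⟨by linarith [hyI.1], by linarith [hyI.2]⟩).symm

/-- A step function is constant off its interior partition points. -/
lemma exists_constOff_stepF {k : ℕ} {x : Fin (k + 2) → ℝ} (a : Fin (k + 1) → ℝ)
    (hx : StrictMono x) (h0 : x 0 = 0) (h1 : x (Fin.last (k + 1)) = 1) :
    ∃ F : Finset ℝ, F.card ≤ k ∧ (∀ y ∈ F, y ∈ Set.Ioo (0:ℝ) 1) ∧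
      ConstOff (stepF x a) F := by
  refine ⟨Finset.univ.image fun i : Fin k => x i.succ.castSucc, ?_, ?_, ?_⟩
  · exact Finset.card_image_le.trans (by simp)
  · intro y hy
    simp only [Finset.mem_image, Finset.mem_univ, true_and] at hy
    obtain ⟨i, rfl⟩ := hy
    refine ⟨?_, ?_⟩
    · rw [← h0]; exact hx (by simp [Fin.lt_def])
    · rw [← h1]; exact hx (Fin.castSucc_lt_last _)
  · intro s t hs hst ht hF
    have key : ∀ i, x i ∉ Set.Icc s t := by
      intro i
      induction i using Fin.cases with
      | zero => rw [h0]; exact fun h => by linarith [h.1]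
      | succ i =>
        induction i using Fin.lastCases with
        | last => rw [Fin.succ_last, h1]; exact fun h => by linarith [h.2]
        | cast i =>
          refine hF _ ?_
          simp only [Finset.coe_image, Finset.coe_univ, Set.image_univ, Set.mem_range]
          exact ⟨i, by rw [Fin.succ_castSucc]⟩
    unfold stepF
    refine Finset.sum_congr rfl fun l _ => ?_
    have k1 := key l.castSucc
    have k2 := key l.succ
    have : s ∈ Set.Ioo (x l.castSucc) (x l.succ) ↔ t ∈ Set.Ioo (x l.castSucc) (x l.succ) := by
      simp only [Set.mem_Icc, Set.mem_Ioo, not_and, not_le] at *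
      constructor
      · rintro ⟨h1, h2⟩
        exact ⟨by linarith, k2 h2.le⟩
      · rintro ⟨h1, h2⟩
        refine ⟨?_, by linarith⟩
        by_contra hc
        linarith [k1 (not_lt.1 hc)]
    by_cases hm : s ∈ Set.Ioo (x l.castSucc) (x l.succ)
    · rw [Set.indicator_of_mem hm, Set.indicator_of_mem (this.1 hm)]
    · rw [Set.indicator_of_notMem hm, Set.indicator_of_notMem (fun h => hm (this.2 h))]

lemma exists_mem_Ioo_of_notMem_range {m : ℕ} {x : Fin (m + 1) → ℝ} {t : ℝ}
    (h0 : x 0 < t) (h1 : t < x (Fin.last m)) (ht : ∀ i, x i ≠ t) :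
    ∃ l : Fin m, t ∈ Set.Ioo (x l.castSucc) (x l.succ) := by
  by_contra! hc
  have : ∀ i, x i < t := by
    intro i
    induction i using Fin.induction with
    | zero => exact h0
    | succ i ih =>
      refine lt_of_le_of_ne (not_lt.1 fun h => hc i ⟨ih, h⟩) (ht _)
  exact absurd (this (Fin.last m)) h1.le.not_gt

lemma stepF_eq_of_mem {m : ℕ} {x : Fin (m + 1) → ℝ} (a : Fin m → ℝ) (hx : StrictMono x)
    {t : ℝ} {l : Fin m} (hl : t ∈ Set.Ioo (x l.castSucc) (x l.succ)) : stepF x a t = a l := by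
  unfold stepF
  rw [Finset.sum_eq_single l]
  · rw [Set.indicator_of_mem hl]
  · intro b _ hb
    refine Set.indicator_of_notMem (fun h => hb ?_) _
    have h1 := hx.lt_iff_lt.1 (h.1.trans hl.2)
    have h2 := hx.lt_iff_lt.1 (hl.1.trans h.2)
    simp only [Fin.lt_def, Fin.val_castSucc, Fin.val_succ] at h1 h2
    ext
    omega
  · simp

/-- A function constant off a finite set is represented by a step function. -/
lemma ConstOff.exists_rep {v : ℝ → ℝ} {F : Finset ℝ} (hv : ConstOff v F)
    (hF : ∀ y ∈ F, y ∈ Set.Ioo (0:ℝ) 1) :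
    ∃ (x : Fin (F.card + 2) → ℝ) (a : Fin (F.card + 1) → ℝ), IsPCRep v x a ∧
      ∀ i, i ≠ 0 → i ≠ Fin.last _ → x i ∈ F := by
  have h1F : (1:ℝ) ∉ F := fun h => lt_irrefl _ (hF _ h).2
  have h0F : (0:ℝ) ∉ insert (1:ℝ) F := by
    simp only [Finset.mem_insert, not_or]
    exact ⟨by norm_num, fun h => lt_irrefl _ (hF _ h).1⟩
  set G : Finset ℝ := insert 0 (insert 1 F) with hG
  have hGm : ∀ y ∈ G, 0 ≤ y ∧ y ≤ 1 := by
    intro y hy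
    simp only [hG, Finset.mem_insert] at hy
    rcases hy with rfl | rfl | hy
    · norm_num
    · norm_num
    · exact ⟨(hF y hy).1.le, (hF y hy).2.le⟩
  have hcard : G.card = F.card + 2 := by
    rw [hG, Finset.card_insert_of_notMem h0F, Finset.card_insert_of_notMem h1F]
  set x := G.orderEmbOfFin hcard with hxdef
  have hxm : StrictMono x := x.strictMono
  have hmem : ∀ i, x i ∈ G := fun i => Finset.orderEmbOfFin_mem _ _ _
  have hsurj : ∀ y ∈ G, ∃ i, x i = y := by
    intro y hy
    have := Finset.range_orderEmbOfFin G hcard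
    exact (this ▸ (Finset.mem_coe.2 hy) : y ∈ Set.range x)
  have hx0 : x 0 = 0 := by
    obtain ⟨i, hi⟩ := hsurj 0 (by simp [hG])
    refine le_antisymm ?_ (hGm _ (hmem 0)).1
    rw [← hi]; exact hxm.monotone (Fin.zero_le _)
  have hx1 : x (Fin.last _) = 1 := by
    obtain ⟨i, hi⟩ := hsurj 1 (by simp [hG])
    refine le_antisymm (hGm _ (hmem _)).2 ?_
    rw [← hi]; exact hxm.monotone (Fin.le_last _)
  refine ⟨x, fun l => v ((x l.castSucc + x l.succ) / 2), ⟨hxm, hx0, hx1, ?_⟩, ?_⟩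
  · have hne : ∀ᵐ t ∂mu01, ∀ i, x i ≠ t := by
      have : ∀ᵐ t ∂mu01, t ∉ Set.range x := by
        refine ae_restrict_of_ae ?_
        exact (Set.finite_range x).countable.ae_notMem _
      filter_upwards [this] with t ht i hi using ht ⟨i, hi⟩
    have hI : ∀ᵐ t ∂mu01, t ∈ Set.Icc (0:ℝ) 1 := ae_restrict_mem measurableSet_Icc
    filter_upwards [hne, hI] with t ht htI
    have ht0 : x 0 < t := lt_of_le_of_ne (hx0 ▸ htI.1) (ht _)
    have ht1 : t < x (Fin.last _) := lt_of_le_of_ne (hx1 ▸ htI.2) (ht _).symm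
    obtain ⟨l, hl⟩ := exists_mem_Ioo_of_notMem_range ht0 ht1 ht
    rw [stepF_eq_of_mem _ hxm hl]
    have hlt := hl.1.trans hl.2
    refine hv.eq (hGm _ (hmem l.castSucc)).1 (hGm _ (hmem l.succ)).2 hl
      ⟨by linarith, by linarith⟩ ?_
    intro y hy hyI
    obtain ⟨i, rfl⟩ := hsurj y (by simp [hG, Finset.mem_coe.1 hy])
    have h1 := hxm.lt_iff_lt.1 hyI.1
    have h2 := hxm.lt_iff_lt.1 hyI.2
    simp only [Fin.lt_def, Fin.val_castSucc, Fin.val_succ] at h1 h2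
    omega
  · intro i hi0 hi1
    have := hmem i
    simp only [hG, Finset.mem_insert] at this
    rcases this with h | h | h
    · exact absurd (hxm.injective (h.trans hx0.symm)) hi0
    · exact absurd (hxm.injective (h.trans hx1.symm)) hi1
    · exact h

/-- Overwriting `v` by a constant `d` on `(p,q)` only creates jumps at those end points where
`v` does not already approach the value `d` from inside. -/
lemma ConstOff.replace {v : ℝ → ℝ} {F G : Set ℝ} (hv : ConstOff v F) {p q d : ℝ}
    (hp0 : 0 ≤ p) (hq1 : q ≤ 1)
    (hFG : ∀ y ∈ F, y ∉ Set.Ioo p q → y ∈ G)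
    (hp : (0 < p → p ∈ G) ∨ ∃ r ∈ Set.Ioo p q, v r = d ∧ ∀ y ∈ F, y ∉ Set.Ioc p r)
    (hq : (q < 1 → q ∈ G) ∨ ∃ r ∈ Set.Ioo p q, v r = d ∧ ∀ y ∈ F, y ∉ Set.Ico r q) :
    ConstOff (fun t => if t ∈ Set.Ioo p q then d else v t) G := by
  have hL : ∀ s, 0 < s → s ≤ p → (∀ y ∈ G, y ∉ Set.Icc s p) → v s = d := by
    intro s hs hsp hG
    rcases hp with hp | ⟨r, hr, rfl, hrF⟩
    · exact absurd ⟨hsp, le_rfl⟩ (hG p (hp (by linarith)))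
    · refine hv s r hs (by linarith [hr.1]) (by linarith [hr.2]) fun y hy hyI => ?_
      by_cases hyp : y ≤ p
      · exact hG y (hFG y hy fun h => by linarith [h.1]) ⟨hyI.1, hyp⟩
      · exact hrF y hy ⟨not_le.1 hyp, hyI.2⟩
  have hR : ∀ t, t < 1 → q ≤ t → (∀ y ∈ G, y ∉ Set.Icc q t) → v t = d := by
    intro t ht hqt hG
    rcases hq with hq | ⟨r, hr, rfl, hrF⟩
    · exact absurd ⟨le_rfl, hqt⟩ (hG q (hq (by linarith)))
    · refine (hv r t (by linarith [hr.1]) (by linarith [hr.2]) ht fun y hy hyI => ?_).symm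
      by_cases hyq : q ≤ y
      · exact hG y (hFG y hy fun h => by linarith [h.2]) ⟨hyq, hyI.2⟩
      · exact hrF y hy ⟨hyI.1, not_le.1 hyq⟩
  intro s t hs hst ht hG
  have hL' : s ≤ p → p ≤ t → v s = d := fun h h' =>
    hL s hs h fun y hy hyI => hG y hy ⟨hyI.1, hyI.2.trans h'⟩
  have hR' : q ≤ t → s ≤ q → v t = d := fun h h' =>
    hR t ht h fun y hy hyI => hG y hy ⟨h'.trans hyI.1, hyI.2⟩
  by_cases hs' : s ∈ Set.Ioo p q <;> by_cases ht' : t ∈ Set.Ioo p q <;>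
    simp only [hs', ht', if_true, if_false]
  · refine (hR' ?_ hs'.2.le).symm
    by_contra h
    exact ht' ⟨hs'.1.trans hst, not_le.1 h⟩
  · refine hL' ?_ ht'.1.le
    by_contra h
    exact hs' ⟨not_le.1 h, hst.trans ht'.2⟩
  · by_cases h1 : t ≤ p
    · exact hv s t hs hst ht fun y hy hyI =>
        hG y (hFG y hy fun h => by linarith [h.1, hyI.2]) hyI
    by_cases h2 : q ≤ s
    · exact hv s t hs hst ht fun y hy hyI =>
        hG y (hFG y hy fun h => by linarith [h.2, hyI.1]) hyI
    have hsp : s ≤ p := by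
      by_contra h
      exact hs' ⟨not_le.1 h, not_le.1 h2⟩
    have hqt : q ≤ t := by
      by_contra h
      exact ht' ⟨not_le.1 h1, not_le.1 h⟩
    rw [hL' hsp (not_le.1 h1).le, hR' hqt (not_le.1 h2).le]

/-- On an interval `(p,q)` where the data equal `c`, the jumps can be moved to the end points
without increasing their number or the distance to the data. -/
lemma ConstOff.exists_clear_Ioo {v f : ℝ → ℝ} {F : Finset ℝ} (hv : ConstOff v F)
    (hF : ∀ y ∈ F, y ∈ Set.Ioo (0:ℝ) 1) {p q c : ℝ} (hp0 : 0 ≤ p) (hq1 : q ≤ 1)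
    (hf : ∀ t ∈ Set.Ioo p q, f t = c) (hne : ∃ z ∈ F, z ∈ Set.Ioo p q) :
    ∃ (w : ℝ → ℝ) (G : Finset ℝ), ConstOff w G ∧ G.card ≤ F.card ∧
      (∀ y ∈ G, y ∈ Set.Ioo (0:ℝ) 1 ∧ ((y ∈ F ∧ y ∉ Set.Ioo p q) ∨ y = p ∨ y = q)) ∧
      ∀ t ∉ F, |w t - f t| ≤ |v t - f t| := by
  have hpq : p < q := by
    obtain ⟨z, -, hz⟩ := hne
    exact hz.1.trans hz.2
  have clear : ∀ (E : Finset ℝ) (d : ℝ), (∀ y ∈ E, y = p ∨ y = q) →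
      E.card ≤ (F.filter (· ∈ Set.Ioo p q)).card →
      (p ∈ E ∨ ∃ r ∈ Set.Ioo p q, v r = d ∧ ∀ y ∈ F, y ∉ Set.Ioc p r) →
      (q ∈ E ∨ ∃ r ∈ Set.Ioo p q, v r = d ∧ ∀ y ∈ F, y ∉ Set.Ico r q) →
      (∀ t ∉ F, t ∈ Set.Ioo p q → |d - c| ≤ |v t - c|) →
      ∃ (w : ℝ → ℝ) (G : Finset ℝ), ConstOff w G ∧ G.card ≤ F.card ∧
      (∀ y ∈ G, y ∈ Set.Ioo (0:ℝ) 1 ∧ ((y ∈ F ∧ y ∉ Set.Ioo p q) ∨ y = p ∨ y = q)) ∧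
      ∀ t ∉ F, |w t - f t| ≤ |v t - f t| := by
    intro E d hE hcard hp hq hd
    refine ⟨fun t => if t ∈ Set.Ioo p q then d else v t,
      F.filter (· ∉ Set.Ioo p q) ∪ E.filter (· ∈ Set.Ioo (0:ℝ) 1), ?_, ?_, ?_, ?_⟩
    · refine hv.replace hp0 hq1 ?_ ?_ ?_
      · intro y hy hy'
        exact Finset.mem_coe.2 (Finset.mem_union_left _ (Finset.mem_filter.2 ⟨hy, hy'⟩))
      · refine hp.imp_left fun h h0 => ?_
        exact Finset.mem_coe.2 (Finset.mem_union_right _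
          (Finset.mem_filter.2 ⟨h, h0, hpq.trans_le hq1⟩))
      · refine hq.imp_left fun h h1 => ?_
        exact Finset.mem_coe.2 (Finset.mem_union_right _
          (Finset.mem_filter.2 ⟨h, hp0.trans_lt hpq, h1⟩))
    · have h1 := Finset.card_filter_add_card_filter_not (s := F) (· ∈ Set.Ioo p q)
      have h2 := Finset.card_filter_le E (· ∈ Set.Ioo (0:ℝ) 1)
      refine (Finset.card_union_le _ _).trans ?_
      omega
    · intro y hy
      rcases Finset.mem_union.1 hy with h | h
      · obtain ⟨h, h'⟩ := Finset.mem_filter.1 h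
        exact ⟨hF y h, Or.inl ⟨h, h'⟩⟩
      · obtain ⟨h, h'⟩ := Finset.mem_filter.1 h
        exact ⟨h', Or.inr (hE y h)⟩
    · intro t ht
      by_cases h : t ∈ Set.Ioo p q
      · simp only [h, if_true, hf t h]
        exact hd t ht h
      · simp only [h, if_false, le_refl]
  by_cases h2 : 2 ≤ (F.filter (· ∈ Set.Ioo p q)).card
  · refine clear {p, q} c (by simp) (Finset.card_le_two.trans h2) (by simp) (by simp) ?_
    intro t _ _
    simp
  obtain ⟨z, hzF, hz⟩ := hne
  have huniq : ∀ y ∈ F, y ∈ Set.Ioo p q → y = z := fun y hy hy' =>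
    Finset.card_le_one.1 (Nat.lt_succ_iff.1 (not_le.1 h2)) y (Finset.mem_filter.2 ⟨hy, hy'⟩) z
      (Finset.mem_filter.2 ⟨hzF, hz⟩)
  have h1 : 1 ≤ (F.filter (· ∈ Set.Ioo p q)).card :=
    Finset.card_pos.2 ⟨z, Finset.mem_filter.2 ⟨hzF, hz⟩⟩
  obtain ⟨hpz, hzq⟩ := hz
  have hleft : ∀ t ∈ Set.Ioo p z, v t = v ((p + z) / 2) := fun t ht =>
    hv.eq hp0 (by linarith) ht ⟨by linarith, by linarith⟩ fun y hy hyI => by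
      have := huniq y hy ⟨hyI.1, hyI.2.trans hzq⟩
      linarith [hyI.2]
  have hright : ∀ t ∈ Set.Ioo z q, v t = v ((z + q) / 2) := fun t ht =>
    hv.eq (by linarith) hq1 ht ⟨by linarith, by linarith⟩ fun y hy hyI => by
      have := huniq y hy ⟨hpz.trans hyI.1, hyI.2⟩
      linarith [hyI.1]
  have hsplit : ∀ t ∉ F, t ∈ Set.Ioo p q → t ∈ Set.Ioo p z ∨ t ∈ Set.Ioo z q := by
    intro t ht htI
    rcases lt_trichotomy t z with h | h | h
    · exact Or.inl ⟨htI.1, h⟩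
    · exact absurd (h ▸ hzF) ht
    · exact Or.inr ⟨h, htI.2⟩
  rcases le_total |v ((p + z) / 2) - c| |v ((z + q) / 2) - c| with hab | hab
  · refine clear {q} (v ((p + z) / 2)) (by simp) (by simpa using h1) (Or.inr ?_) (by simp) ?_
    · refine ⟨(p + z) / 2, ⟨by linarith, by linarith⟩, rfl, fun y hy hyI => ?_⟩
      have := huniq y hy ⟨hyI.1, by linarith [hyI.2]⟩
      linarith [hyI.2]
    · intro t ht htI
      rcases hsplit t ht htI with h | h
      · rw [hleft t h]
      · rwa [hright t h]
  · refine clear {p} (v ((z + q) / 2)) (by simp) (by simpa using h1) (by simp) (Or.inr ?_) ?_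
    · refine ⟨(z + q) / 2, ⟨by linarith, by linarith⟩, rfl, fun y hy hyI => ?_⟩
      have := huniq y hy ⟨by linarith [hyI.1], hyI.2⟩
      linarith [hyI.1]
    · intro t ht htI
      rcases hsplit t ht htI with h | h
      · rwa [hleft t h]
      · rw [hright t h]

/-- A point of `(0,1)` off a closed set `C` lies in a gap of `C ∪ {0, 1}`. -/
lemma exists_gap {C : Set ℝ} (hC : IsClosed C) {z : ℝ} (hz : z ∈ Set.Ioo (0:ℝ) 1)
    (hzC : z ∉ C) :
    ∃ p q, 0 ≤ p ∧ q ≤ 1 ∧ z ∈ Set.Ioo p q ∧ (p = 0 ∨ p ∈ C) ∧ (q = 1 ∨ q ∈ C) ∧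
      ∀ y ∈ C, y ∉ Set.Ioo p q := by
  have hclosed (a : ℝ) : IsClosed (insert a C) := by
    rw [Set.insert_eq]; exact isClosed_singleton.union hC
  obtain ⟨p, ⟨⟨hp0, hpz⟩, hpC⟩, hpmax⟩ :=
    ((isCompact_Icc (a := (0:ℝ)) (b := z)).inter_right (hclosed 0)).exists_isGreatest
      ⟨0, ⟨le_rfl, hz.1.le⟩, Or.inl rfl⟩
  obtain ⟨q, ⟨⟨hzq, hq1⟩, hqC⟩, hqmin⟩ :=
    ((isCompact_Icc (a := z) (b := (1:ℝ))).inter_right (hclosed 1)).exists_isLeast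
      ⟨1, ⟨hz.2.le, le_rfl⟩, Or.inl rfl⟩
  refine ⟨p, q, hp0, hq1, ⟨lt_of_le_of_ne hpz ?_, lt_of_le_of_ne hzq ?_⟩, hpC, hqC, ?_⟩
  · rintro rfl
    rcases hpC with h | h
    · exact hz.1.ne' h
    · exact hzC h
  · rintro rfl
    rcases hqC with h | h
    · exact hz.2.ne h
    · exact hzC h
  · intro y hy hyI
    rcases le_total y z with h | h
    · exact absurd (hpmax ⟨⟨hp0.trans hyI.1.le, h⟩, Or.inr hy⟩) hyI.1.not_ge
    · exact absurd (hqmin ⟨⟨h, hyI.2.le.trans hq1⟩, Or.inr hy⟩) hyI.2.not_ge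

/-- If the data `f` are constant off the closed set `C`, all jumps of `v` can be moved into `C`
without increasing their number or the distance to `f`. -/
lemma ConstOff.exists_jumps_subset {f : ℝ → ℝ} {C : Set ℝ} (hC : IsClosed C)
    (hf : ConstOff f C) {v : ℝ → ℝ} {F : Finset ℝ} (hv : ConstOff v F)
    (hF : ∀ y ∈ F, y ∈ Set.Ioo (0:ℝ) 1) :
    ∃ (w : ℝ → ℝ) (G : Finset ℝ), ConstOff w G ∧ G.card ≤ F.card ∧
      (∀ y ∈ G, y ∈ Set.Ioo (0:ℝ) 1 ∧ y ∈ C) ∧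
      ∀ᵐ t ∂mu01, |w t - f t| ≤ |v t - f t| := by
  induction hN : (F.filter (· ∉ C)).card using Nat.strong_induction_on generalizing v F with
  | _ N ih =>
  subst hN
  by_cases hbad : ∃ z ∈ F, z ∉ C
  · obtain ⟨z, hzF, hzC⟩ := hbad
    obtain ⟨p, q, hp0, hq1, hz, hpC, hqC, hgap⟩ := exists_gap hC (hF z hzF) hzC
    obtain ⟨v', F', hv', hcard, hF', hle⟩ := hv.exists_clear_Ioo hF (f := f) (c := f z) hp0 hq1
      (fun t ht => hf.eq hp0 hq1 ht hz hgap) ⟨z, hzF, hz⟩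
    have hlt : (F'.filter (· ∉ C)).card < (F.filter (· ∉ C)).card := by
      refine Finset.card_lt_card (Finset.ssubset_iff_of_subset ?_ |>.2
        ⟨z, Finset.mem_filter.2 ⟨hzF, hzC⟩, ?_⟩)
      · intro y hy
        obtain ⟨hy, hyC⟩ := Finset.mem_filter.1 hy
        obtain ⟨hy01, ⟨hyF, -⟩ | rfl | rfl⟩ := hF' y hy
        · exact Finset.mem_filter.2 ⟨hyF, hyC⟩
        · exact (hpC.elim hy01.1.ne' hyC).elim
        · exact (hqC.elim hy01.2.ne hyC).elim
      · intro hy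
        obtain ⟨-, ⟨-, h⟩ | rfl | rfl⟩ := hF' z (Finset.mem_filter.1 hy).1
        · exact h hz
        · exact lt_irrefl _ hz.1
        · exact lt_irrefl _ hz.2
    obtain ⟨w, G, hw, hG, hGC, hwle⟩ := ih _ hlt hv' (fun y hy => (hF' y hy).1) rfl
    refine ⟨w, G, hw, hG.trans hcard, hGC, ?_⟩
    have hae : ∀ᵐ t ∂mu01, t ∉ F :=
      ae_restrict_of_ae (F.countable_toSet.ae_notMem volume)
    filter_upwards [hwle, hae] with t h1 h2 using h1.trans (hle t h2)
  · push Not at hbad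
    exact ⟨v, F, hv, le_rfl, fun y hy => ⟨hF y hy, hbad y hy⟩, ae_of_all _ fun _ => le_rfl⟩

lemma integrable_stepF {m : ℕ} (x : Fin (m + 1) → ℝ) (a : Fin m → ℝ) :
    Integrable (stepF x a) mu01 := by
  have : IsFiniteMeasure mu01 := by unfold mu01; infer_instance
  exact integrable_finsetSum _ fun l _ => (integrable_const (a l)).indicator measurableSet_Ioo

lemma measurable_stepOn {n : ℕ} (j : Fin n → ℝ) (α : Fin (n + 1) → ℝ) :
    Measurable (stepOn j α) := by
  have hmono : Monotone fun t : ℝ => (Finset.univ.filter fun i => j i < t).card := by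
    intro s t hst
    exact Finset.card_le_card (Finset.monotone_filter_right _ fun i _ h => lt_of_lt_of_le h hst)
  have : stepOn j α = (fun k : ℕ => if h : k < n + 1 then α ⟨k, h⟩ else 0) ∘
      fun t : ℝ => (Finset.univ.filter fun i => j i < t).card := by
    ext t
    have h : (Finset.univ.filter fun i => j i < t).card < n + 1 :=
      Nat.lt_succ_of_le ((Finset.card_filter_le _ _).trans (by simp))
    simp only [Function.comp_apply, h, dif_pos, stepOn]
  rw [this]
  exact (measurable_of_countable _).comp hmono.measurable

lemma stepOn_congr {n : ℕ} {j : Fin n → ℝ} (α : Fin (n + 1) → ℝ) {s t : ℝ}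
    (h : ∀ i, j i < s ↔ j i < t) : stepOn j α s = stepOn j α t := by
  simp only [stepOn, h]

lemma integrable_convK_stepOn {n : ℕ} (j : Fin n → ℝ) (α : Fin (n + 1) → ℝ) {K : ℝ → ℝ}
    {κ : ℝ} (hKint : Integrable K) (hKsupp : Function.support K ⊆ Set.Icc (-κ) κ) :
    Integrable (convK K (stepOn j α)) mu01 := by
  set I := Set.Icc (-κ) (1 + κ)
  have hg : Integrable (I.indicator (stepOn j α)) := by
    rw [integrable_indicator_iff measurableSet_Icc]
    refine Measure.integrableOn_of_bounded (M := ∑ i, |α i|) (by simp)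
      (measurable_stepOn j α).aestronglyMeasurable (ae_of_all _ fun t => ?_)
    exact Finset.single_le_sum (f := fun i => |α i|) (fun _ _ => abs_nonneg _)
      (Finset.mem_univ _)
  have hconv := (hKint.integrable_convolution (ContinuousLinearMap.mul ℝ ℝ) hg).integrableOn
    (s := Set.Icc (0:ℝ) 1)
  refine (integrableOn_congr_fun (fun t ht => ?_) measurableSet_Icc).1 hconv
  rw [convolution_def]
  refine integral_congr_ae (ae_of_all _ fun s => ?_)
  simp only [ContinuousLinearMap.mul_apply']
  by_cases hs : K s = 0
  · simp [hs]
  · have := hKsupp hs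
    rw [Set.indicator_of_mem]
    exact ⟨by linarith [ht.1, this.2], by linarith [ht.2, this.1]⟩

lemma constOff_convK_stepOn {n : ℕ} (j : Fin n → ℝ) (α : Fin (n + 1) → ℝ) {K : ℝ → ℝ}
    {κ : ℝ} (hκ : 0 ≤ κ) (hKsupp : Function.support K ⊆ Set.Icc (-κ) κ) :
    ConstOff (convK K (stepOn j α)) (⋃ i, Set.Icc (j i - κ) (j i + κ)) := by
  intro s t _ hst _ hC
  refine integral_congr_ae (ae_of_all _ fun r => ?_)
  by_cases hr : K r = 0
  · simp [hr]
  have hr := hKsupp hr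
  have : stepOn j α (s - r) = stepOn j α (t - r) := by
    refine stepOn_congr α fun i => ⟨fun h => by linarith, fun h => ?_⟩
    by_contra hc
    refine hC (max s (j i - κ)) (Set.mem_iUnion.2 ⟨i, le_max_right _ _, max_le ?_ ?_⟩)
      ⟨le_max_left _ _, max_le hst.le ?_⟩
    all_goals linarith [hr.1, hr.2]
  simp only [this]

lemma IsPCIn.isPC {u : ℝ → ℝ} {S : Set ℝ} (h : IsPCIn u S) : IsPC u := by
  obtain ⟨m, x, a, hrep, -⟩ := h
  exact ⟨m, x, a, hrep⟩

lemma IsPC.exists_rep_jumps {u : ℝ → ℝ} (h : IsPC u) :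
    ∃ (x : Fin (jumps u + 2) → ℝ) (a : Fin (jumps u + 1) → ℝ), IsPCRep u x a := by
  refine Nat.sInf_mem (s := {k : ℕ | ∃ (x : Fin (k + 2) → ℝ) (a : Fin (k + 1) → ℝ),
    IsPCRep u x a}) ?_
  obtain ⟨m, x, a, hrep⟩ := h
  cases m with
  | zero =>
    have h0 := hrep.2.1
    have h1 := hrep.2.2.1
    exact absurd (h0.symm.trans h1) zero_ne_one
  | succ k => exact ⟨k, x, a, hrep⟩

lemma pottsVal_nonneg {γ : ℝ} (hγ : 0 ≤ γ) (f u : ℝ → ℝ) : 0 ≤ PottsVal γ f u :=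
  add_nonneg (mul_nonneg hγ (Nat.cast_nonneg _)) (integral_nonneg fun _ => abs_nonneg _)

/-- For integrable data that are constant off a closed set `C`, every piecewise constant
function can be improved to one whose jumps lie in `C`. -/
theorem exists_isPCIn_pottsVal_le {f : ℝ → ℝ} {C : Set ℝ} (hC : IsClosed C)
    (hf : ConstOff f C) (hfint : Integrable f mu01) {γ : ℝ} (hγ : 0 ≤ γ) {u : ℝ → ℝ}
    (hu : IsPC u) : ∃ w, IsPCIn w C ∧ PottsVal γ f w ≤ PottsVal γ f u := by
  obtain ⟨x, a, hx, h0, h1, hae⟩ := hu.exists_rep_jumps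
  obtain ⟨F, hFcard, hF, hv⟩ := exists_constOff_stepF a hx h0 h1
  obtain ⟨w, G, hw, hGcard, hG, hle⟩ := ConstOff.exists_jumps_subset hC hf hv hF
  obtain ⟨y, b, hrep, hy⟩ := hw.exists_rep fun y hy => (hG y hy).1
  refine ⟨w, ⟨_, y, b, hrep, fun i hi hi' => (hG _ (hy i hi hi')).2⟩, ?_⟩
  have hjumps : jumps w ≤ jumps u :=
    (Nat.sInf_le ⟨y, b, hrep⟩ : jumps w ≤ G.card).trans (hGcard.trans hFcard)
  have hdist : L1dist w f ≤ L1dist u f := by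
    have hu' : L1dist u f = L1dist (stepF x a) f :=
      integral_congr_ae (hae.mono fun t ht => by simp only [ht])
    rw [hu']
    exact integral_mono_of_nonneg (ae_of_all _ fun _ => abs_nonneg _)
      ((integrable_stepF x a).sub hfint).abs hle
  exact add_le_add (mul_le_mul_of_nonneg_left (Nat.cast_le.2 hjumps) hγ) hdist

theorem statement_13
    (n : ℕ) (j : Fin (n + 1) → ℝ) (α : Fin (n + 2) → ℝ)
    (hj : StrictMono j) (hj0 : 0 < j 0) (hj1 : j (Fin.last n) < 1)
    (hadj : ∀ i : Fin (n + 1), α i.castSucc ≠ α i.succ)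
    (K : ℝ → ℝ) (κ : ℝ) (hκ : 0 < κ)
    (hKint : Integrable K) (hKpos : ∀ x, 0 ≤ K x)
    (hKsym : ∀ x, K (-x) = K x) (hKnorm : (∫ x, K x) = 1)
    (hKsupp : Function.support K ⊆ Set.Icc (-κ) κ)
    (hκl : κ ≤ lmin j / 6)
    (γ : ℝ) (hγ : 0 < γ)
    (u₀ : ℝ → ℝ) (hu₀ : IsPC u₀) :
    (∃ u₁ : ℝ → ℝ,
      IsPCIn u₁ (⋃ i : Fin (n + 1), Set.Icc (j i - κ) (j i + κ)) ∧
      PottsVal γ (convK K (stepOn j α)) u₁ ≤ PottsVal γ (convK K (stepOn j α)) u₀) ∧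
    sInf (PottsVal γ (convK K (stepOn j α)) '' {u : ℝ → ℝ | IsPC u}) =
      sInf (PottsVal γ (convK K (stepOn j α)) ''
        {u : ℝ → ℝ | IsPCIn u (⋃ i : Fin (n + 1), Set.Icc (j i - κ) (j i + κ))}) := by
  have hC : IsClosed (⋃ i : Fin (n + 1), Set.Icc (j i - κ) (j i + κ)) :=
    isClosed_iUnion_of_finite fun _ => isClosed_Icc
  have key : ∀ u, IsPC u → ∃ w,
      IsPCIn w (⋃ i : Fin (n + 1), Set.Icc (j i - κ) (j i + κ)) ∧
      PottsVal γ (convK K (stepOn j α)) w ≤ PottsVal γ (convK K (stepOn j α)) u := fun u hu =>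
    exists_isPCIn_pottsVal_le hC (constOff_convK_stepOn j α hκ.le hKsupp)
      (integrable_convK_stepOn j α hKint hKsupp) hγ.le hu
  refine ⟨key u₀ hu₀, le_antisymm ?_ ?_⟩
  · obtain ⟨w, hw, -⟩ := key u₀ hu₀
    refine csInf_le_csInf ⟨0, ?_⟩ ⟨_, w, hw, rfl⟩ (Set.image_mono fun u hu => hu.isPC)
    rintro _ ⟨u, -, rfl⟩
    exact pottsVal_nonneg hγ.le _ _
  · refine le_csInf ⟨_, u₀, hu₀, rfl⟩ ?_
    rintro _ ⟨u, hu, rfl⟩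
    obtain ⟨w, hw, hle⟩ := key u hu
    refine csInf_le_of_le ⟨0, ?_⟩ ⟨w, hw, rfl⟩ hle
    rintro _ ⟨u, -, rfl⟩
    exact pottsVal_nonneg hγ.le _ _
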